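/- Fix a sequence of matchings and a non-negative integer load vector at the end of round t₁, and run the token process. For any subset 𝓑 of the tokens, any subset of nodes D ⊆ V, and any round t₂ > t₁, it holds that P( ⋀_{i∈𝓑} (w_i^{(t₂)} ∈ D) ) ≤ ∏_{i∈𝓑} M^{[t₁+1,t₂]}_{w_i^{(t₁)}, D} = ∏_{i∈𝓑} P( w_i^{(t₂)} ∈ D ). -/

import Mathlib

namespace LB


/-- A matching on the vertex set `Fin n`, encoded as an involution;
`f u = u` means that `u` is unmatched, and `f u = v ≠ u` means `{u,v}`
is an edge of the matching. -/
structure Matching (n : ℕ) where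
  f : Fin n → Fin n
  invol : ∀ u, f (f u) = u

/-- The matching matrix of a matching: entries `1/2` at `(u,u)`, `(u,v)`, `(v,u)`, `(v,v)`
for matched pairs `{u,v}`, entry `1` at `(w,w)` for unmatched `w`, and `0` otherwise. -/
noncomputable def Matching.matrix {n : ℕ} (m : Matching n) : Matrix (Fin n) (Fin n) ℝ :=
  Matrix.of fun u v =>
    if m.f u = u then (if v = u then 1 else 0)
    else if v = u ∨ v = m.f u then (1 : ℝ) / 2 else 0

/-- `M^{[t₁,t₂]} = M^{(t₁)} * ⋯ * M^{(t₂)}` (the identity matrix if `t₁ > t₂`). -/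
noncomputable def prodMatrix {n : ℕ} (M : ℕ → Matching n) (t₁ t₂ : ℕ) : Matrix (Fin n) (Fin n) ℝ :=
  ((List.range' t₁ (t₂ + 1 - t₁)).map fun s => (M s).matrix).prod

/-- Sum of `g u v` over the matched pairs `[u:v]` (i.e. `{u,v}` in the matching with `u < v`). -/
noncomputable def pairSum {n : ℕ} (m : Matching n) (g : Fin n → Fin n → ℝ) : ℝ :=
  ∑ u : Fin n, if u < m.f u then g u (m.f u) else 0

/-- The discrepancy `max_{u,v} |x_u - x_v|` of a load vector. -/
noncomputable def disc {n : ℕ} (x : Fin n → ℝ) : ℝ :=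
  ⨆ u : Fin n, ⨆ v : Fin n, |x u - x v|

/-- Discrepancy of an integer load vector. -/
noncomputable def discZ {n : ℕ} (x : Fin n → ℤ) : ℝ := disc fun u => (x u : ℝ)

/-- The time interval `[t₁,t₂]` (with its matchings) is `(K,ε)`-smoothing. -/
def IsSmoothing {n : ℕ} (M : ℕ → Matching n) (t₁ t₂ : ℕ) (K ε : ℝ) : Prop :=
  ∀ ξ : Fin n → ℝ, disc ξ ≤ K → disc (Matrix.vecMul ξ (prodMatrix M (t₁ + 1) t₂)) ≤ ε

/-- `τ_cont(K,ε)`: the minimum `t` such that `[0,t]` is `(K,ε)`-smoothing. -/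
noncomputable def tauCont {n : ℕ} (M : ℕ → Matching n) (K ε : ℝ) : ℕ :=
  sInf {t : ℕ | IsSmoothing M 0 t K ε}

/-- One round of the discrete process: two matched nodes split their total load,
the node indicated by the orientation bit (stored at the pair `(min,max)`) receiving
the excess token; `φ u v = true` for `u < v` means the excess token goes to `u`. -/
def step {n : ℕ} (m : Matching n) (φ : Fin n → Fin n → Bool) (x : Fin n → ℤ) :
    Fin n → ℤ := fun u =>
  if m.f u = u then x u
  else if u < m.f u then
    (if φ u (m.f u) then Int.ediv (x u + x (m.f u) + 1) 2
     else Int.ediv (x u + x (m.f u)) 2)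
  else
    (if φ (m.f u) u then Int.ediv (x u + x (m.f u)) 2
     else Int.ediv (x u + x (m.f u) + 1) 2)

/-- The discrete process started at round `t₁` from load vector `x`:
`loadsFrom M t₁ Φ x r` is the load vector `r` rounds later; the `(r+1)`-st
step uses the matching `M (t₁+r+1)` and the orientations `Φ (r+1)`. -/
def loadsFrom {n : ℕ} (M : ℕ → Matching n) (t₁ : ℕ) (Φ : ℕ → Fin n → Fin n → Bool)
    (x : Fin n → ℤ) : ℕ → Fin n → ℤ
  | 0 => x
  | r + 1 => step (M (t₁ + r + 1)) (Φ (r + 1)) (loadsFrom M t₁ Φ x r)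

/-- The discrete process started at round `0`; round `t ≥ 1` uses matching `M t`. -/
def loads {n : ℕ} (M : ℕ → Matching n) (Φ : ℕ → Fin n → Fin n → Bool)
    (x : Fin n → ℤ) : ℕ → Fin n → ℤ := loadsFrom M 0 Φ x

/-- Extend a finite family of random choices (one for each of the rounds `1,…,T`)
to all rounds: round `s` reads index `s-1`. -/
def lift {A : Type*} (a₀ : A) {T : ℕ} (ω : Fin T → A) : ℕ → A := fun s =>
  if h : s - 1 < T then ω ⟨s - 1, h⟩ else a₀

/-- Default (irrelevant) orientation. -/
def orientDefault (n : ℕ) : Fin n → Fin n → Bool := fun _ _ => true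

/-- Probability of an event under the uniform distribution on a finite sample space;
this makes all the per-round random choices independent and uniform. -/
noncomputable def pr {Ω : Type*} [Fintype Ω] (A : Ω → Prop) : ℝ :=
  haveI := Classical.decPred A
  ((Finset.univ.filter A).card : ℝ) / (Fintype.card Ω : ℝ)

/-- Expectation under the uniform distribution on a finite sample space. -/
noncomputable def ex {Ω : Type*} [Fintype Ω] (Z : Ω → ℝ) : ℝ :=
  (∑ ω : Ω, Z ω) / (Fintype.card Ω : ℝ)

/-- `λ(M) = max{|λ₂(M)|, |λ_n(M)|}` for a symmetric doubly stochastic matrix `M`,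
characterized as the operator norm of `M` on the subspace orthogonal to `𝟙`. -/
noncomputable def lamMax {n : ℕ} (M : Matrix (Fin n) (Fin n) ℝ) : ℝ :=
  ⨆ x : {x : Fin n → ℝ // (∑ u, x u) = 0 ∧ (∑ u, (x u) ^ 2) = 1},
    Real.sqrt (∑ u, (M.mulVec x.1 u) ^ 2)

/-- The round matrix `M = M^{(1)} ⋯ M^{(d)}` of the balancing circuit. -/
noncomputable def roundMatrix {n d : ℕ} (Ms : Fin d → Matching n) : Matrix (Fin n) (Fin n) ℝ :=
  (List.ofFn fun i => (Ms i).matrix).prod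

/-- The periodic sequence of matchings of the balancing circuit:
round `t` uses `M^{(((t-1) mod d)+1)}`. -/
def circuit {n d : ℕ} (hd : 0 < d) (Ms : Fin d → Matching n) : ℕ → Matching n :=
  fun t => Ms ⟨(t - 1) % d, Nat.mod_lt _ hd⟩


/-- One round of the token process.  For each matched pair `{u,v}` (with `u < v`),
all tokens currently at `u` or `v` are pooled; node `u` receives the `k` tokens of
smallest `π`-rank from the pool, where `k = ⌈pool/2⌉` if the orientation bit
`φ u v` is `true` and `k = ⌊pool/2⌋` otherwise, and `v` receives the rest.
A single uniformly random permutation `π` of all tokens induces an independent,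
uniformly random draw (without replacement) inside each pool. -/
def tokenStep {n N : ℕ} (m : Matching n) (φ : Fin n → Fin n → Bool)
    (π : Equiv.Perm (Fin N)) (w : Fin N → Fin n) : Fin N → Fin n := fun i =>
  if m.f (w i) = w i then w i
  else
    let u : Fin n := if w i < m.f (w i) then w i else m.f (w i)
    let v : Fin n := if w i < m.f (w i) then m.f (w i) else w i
    let P : Finset (Fin N) := Finset.univ.filter fun j => w j = u ∨ w j = v
    let k : ℕ := if φ u v then (P.card + 1) / 2 else P.card / 2
    if (P.filter fun j => π j < π i).card < k then u else v

/-- The token process started at round `t₁` from the placement `w` of the tokens: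
`tokensFrom M t₁ R w r i` is the node hosting token `i` after `r` further rounds;
the `(r+1)`-st step uses the matching `M (t₁+r+1)` and the random choices `R (r+1)`
(an orientation bit for every pair together with a random permutation of the tokens). -/
def tokensFrom {n N : ℕ} (M : ℕ → Matching n) (t₁ : ℕ)
    (R : ℕ → (Fin n → Fin n → Bool) × Equiv.Perm (Fin N)) (w : Fin N → Fin n) :
    ℕ → Fin N → Fin n
  | 0 => w
  | r + 1 => tokenStep (M (t₁ + r + 1)) (R (r + 1)).1 (R (r + 1)).2 (tokensFrom M t₁ R w r)



section aux

variable {n N : ℕ}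

/-- pool of token `i` -/
def pool (m : Matching n) (w : Fin N → Fin n) (i : Fin N) : Finset (Fin N) :=
  Finset.univ.filter fun j => w j = w i ∨ w j = m.f (w i)

/-- rank of token `i` in its pool -/
def rk (m : Matching n) (w : Fin N → Fin n) (π : Equiv.Perm (Fin N)) (i : Fin N) : ℕ :=
  ((pool m w i).filter fun j => π j < π i).card

/-- smaller node of the pair -/
def lo (m : Matching n) (w : Fin N → Fin n) (i : Fin N) : Fin n := min (w i) (m.f (w i))

/-- larger node of the pair -/
def hi (m : Matching n) (w : Fin N → Fin n) (i : Fin N) : Fin n := max (w i) (m.f (w i))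

theorem step_eq (m : Matching n) (φ : Fin n → Fin n → Bool) (π : Equiv.Perm (Fin N))
    (w : Fin N → Fin n) (i : Fin N) :
    tokenStep m φ π w i = if rk m w π i < (if φ (lo m w i) (hi m w i)
      then ((pool m w i).card + 1) / 2 else (pool m w i).card / 2)
      then lo m w i else hi m w i := by
  unfold tokenStep
  by_cases h : m.f (w i) = w i
  · simp [h, lo, hi]
  · rw [if_neg h]
    by_cases h2 : w i < m.f (w i)
    · have a : lo m w i = w i := min_eq_left h2.le
      have b : hi m w i = m.f (w i) := max_eq_right h2.le
      simp only [h2, if_true, a, b, rk, pool]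
    · have h3 := not_lt.1 h2
      have a : lo m w i = m.f (w i) := min_eq_right h3
      have b : hi m w i = w i := max_eq_left h3
      have e : (Finset.univ.filter fun j => w j = m.f (w i) ∨ w j = w i) = pool m w i := by
        unfold pool
        ext j
        simp [or_comm]
      simp only [h2, if_false, a, b, rk, e]

theorem mem_pool_self (m : Matching n) (w : Fin N → Fin n) (i : Fin N) : i ∈ pool m w i := by
  simp [pool]

theorem mem_pool_cases {m : Matching n} {w : Fin N → Fin n} {i j : Fin N}
    (h : j ∈ pool m w i) : w j = w i ∨ w j = m.f (w i) := by
  simpa [pool] using h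

theorem pool_eq {m : Matching n} {w : Fin N → Fin n} {i j : Fin N}
    (h : j ∈ pool m w i) : pool m w j = pool m w i := by
  unfold pool
  ext x
  rcases mem_pool_cases h with e | e
  · simp [e]
  · simp [e, m.invol, or_comm]

theorem lo_eq {m : Matching n} {w : Fin N → Fin n} {i j : Fin N}
    (h : j ∈ pool m w i) : lo m w j = lo m w i := by
  unfold lo
  rcases mem_pool_cases h with e | e
  · simp [e]
  · simp [e, m.invol, min_comm]

theorem hi_eq {m : Matching n} {w : Fin N → Fin n} {i j : Fin N}
    (h : j ∈ pool m w i) : hi m w j = hi m w i := by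
  unfold hi
  rcases mem_pool_cases h with e | e
  · simp [e]
  · simp [e, m.invol, max_comm]

theorem mem_pool_symm {m : Matching n} {w : Fin N → Fin n} {i j : Fin N}
    (h : j ∈ pool m w i) : i ∈ pool m w j := by
  rw [pool_eq h]; exact mem_pool_self m w i

theorem mem_pool_of_lo {m : Matching n} {w : Fin N → Fin n} {i j : Fin N}
    (h : lo m w j = lo m w i) : j ∈ pool m w i := by
  have hj := m.invol (w j)
  have hi := m.invol (w i)
  simp only [pool, Finset.mem_filter, Finset.mem_univ, true_and]
  unfold lo at h
  rcases min_choice (w j) (m.f (w j)) with a | a <;>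
    rcases min_choice (w i) (m.f (w i)) with b | b <;> rw [a, b] at h
  · exact Or.inl h
  · exact Or.inr h
  · right; rw [← h, hj]
  · left; rw [← hj, h, hi]

theorem f_lo (m : Matching n) (w : Fin N → Fin n) (i : Fin N) :
    m.f (lo m w i) = hi m w i := by
  unfold lo hi
  rcases le_total (w i) (m.f (w i)) with h | h
  · rw [min_eq_left h, max_eq_right h]
  · rw [min_eq_right h, max_eq_left h, m.invol]

theorem f_hi (m : Matching n) (w : Fin N → Fin n) (i : Fin N) :
    m.f (hi m w i) = lo m w i := by
  rw [← f_lo, m.invol]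

theorem rk_lt (m : Matching n) (w : Fin N → Fin n) (π : Equiv.Perm (Fin N)) (i : Fin N) :
    rk m w π i < (pool m w i).card := by
  unfold rk
  apply Finset.card_lt_card
  rw [Finset.filter_ssubset]
  exact ⟨i, mem_pool_self m w i, lt_irrefl _⟩

theorem rk_lt_rk {m : Matching n} {w : Fin N → Fin n} {π : Equiv.Perm (Fin N)} {i j : Fin N}
    (h : j ∈ pool m w i) (hlt : π j < π i) : rk m w π j < rk m w π i := by
  unfold rk
  rw [pool_eq h]
  apply Finset.card_lt_card
  refine ⟨fun x hx => ?_, fun hs => ?_⟩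
  · simp only [Finset.mem_filter] at hx ⊢
    exact ⟨hx.1, hx.2.trans hlt⟩
  · have := hs (Finset.mem_filter.2 ⟨h, hlt⟩)
    exact lt_irrefl _ (Finset.mem_filter.1 this).2

theorem rk_inj {m : Matching n} {w : Fin N → Fin n} {π : Equiv.Perm (Fin N)} {i j : Fin N}
    (h : j ∈ pool m w i) (e : rk m w π j = rk m w π i) : j = i := by
  rcases lt_trichotomy (π j) (π i) with a | a | a
  · exact absurd e (rk_lt_rk h a).ne
  · exact π.injective a
  · exact absurd e (rk_lt_rk (mem_pool_symm h) a).ne'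

theorem exists_tau (m : Matching n) (w : Fin N → Fin n) (π : Equiv.Perm (Fin N)) (i : Fin N) :
    ∃ j, j ∈ pool m w i ∧ rk m w π j + rk m w π i + 1 = (pool m w i).card := by
  have hsurj := Finset.surjOn_of_injOn_of_card_le (s := pool m w i)
    (t := Finset.range (pool m w i).card) (rk m w π)
    (fun j hj => by
      have := rk_lt m w π j
      rw [pool_eq hj] at this
      simpa using this)
    (fun a ha b hb e => rk_inj (by rw [pool_eq hb]; exact ha) e) (by simp)
  have hl := rk_lt m w π i
  have hmem : (pool m w i).card - 1 - rk m w π i ∈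
      ((Finset.range (pool m w i).card : Finset ℕ) : Set ℕ) := by
    simp; omega
  obtain ⟨j, hj, e⟩ := hsurj hmem
  exact ⟨j, hj, by omega⟩

/-- the reverse-rank pairing -/
noncomputable def tau (m : Matching n) (w : Fin N → Fin n) (π : Equiv.Perm (Fin N))
    (i : Fin N) : Fin N := (exists_tau m w π i).choose

theorem tau_mem (m : Matching n) (w : Fin N → Fin n) (π : Equiv.Perm (Fin N)) (i : Fin N) :
    tau m w π i ∈ pool m w i := (exists_tau m w π i).choose_spec.1

theorem tau_rk (m : Matching n) (w : Fin N → Fin n) (π : Equiv.Perm (Fin N)) (i : Fin N) :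
    rk m w π (tau m w π i) + rk m w π i + 1 = (pool m w i).card :=
  (exists_tau m w π i).choose_spec.2

theorem tau_unique {m : Matching n} {w : Fin N → Fin n} {π : Equiv.Perm (Fin N)} {i j : Fin N}
    (h : j ∈ pool m w i) (e : rk m w π j + rk m w π i + 1 = (pool m w i).card) :
    tau m w π i = j := by
  refine rk_inj (m := m) (w := w) (π := π) ?_ ?_
  · exact pool_eq h ▸ tau_mem m w π i
  · have := tau_rk m w π i
    omega

theorem tau_tau (m : Matching n) (w : Fin N → Fin n) (π : Equiv.Perm (Fin N)) (i : Fin N) :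
    tau m w π (tau m w π i) = i := by
  apply tau_unique (mem_pool_symm (tau_mem m w π i))
  have := tau_rk m w π i
  rw [pool_eq (tau_mem m w π i)]
  omega

/-- representative of the pair of `i` -/
noncomputable def rep (m : Matching n) (w : Fin N → Fin n) (π : Equiv.Perm (Fin N))
    (i : Fin N) : Fin N := min i (tau m w π i)

theorem rep_tau (m : Matching n) (w : Fin N → Fin n) (π : Equiv.Perm (Fin N)) (i : Fin N) :
    rep m w π (tau m w π i) = rep m w π i := by
  unfold rep
  rw [tau_tau, min_comm]

/-- flip function on tokens -/
noncomputable def sigF (m : Matching n) (w : Fin N → Fin n) (π : Equiv.Perm (Fin N))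
    (s : Fin N → Bool) (i : Fin N) : Fin N :=
  if s (rep m w π i) then tau m w π i else i

theorem sigF_invol (m : Matching n) (w : Fin N → Fin n) (π : Equiv.Perm (Fin N))
    (s : Fin N → Bool) : Function.Involutive (sigF m w π s) := by
  intro i
  by_cases h : s (rep m w π i)
  · simp [sigF, h, rep_tau, tau_tau]
  · simp [sigF, h]

/-- flip permutation on tokens -/
noncomputable def sig (m : Matching n) (w : Fin N → Fin n) (π : Equiv.Perm (Fin N))
    (s : Fin N → Bool) : Equiv.Perm (Fin N) := (sigF_invol m w π s).toPerm

theorem sig_apply (m : Matching n) (w : Fin N → Fin n) (π : Equiv.Perm (Fin N))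
    (s : Fin N → Bool) (i : Fin N) : sig m w π s i =
      if s (rep m w π i) then tau m w π i else i := rfl

theorem sig_mem (m : Matching n) (w : Fin N → Fin n) (π : Equiv.Perm (Fin N))
    (s : Fin N → Bool) (i : Fin N) : sig m w π s i ∈ pool m w i := by
  rw [sig_apply]
  split_ifs
  · exact tau_mem m w π i
  · exact mem_pool_self m w i

theorem sig_sig (m : Matching n) (w : Fin N → Fin n) (π : Equiv.Perm (Fin N))
    (s : Fin N → Bool) (i : Fin N) : sig m w π s (sig m w π s i) = i :=
  sigF_invol m w π s i

theorem tau_sig (m : Matching n) (w : Fin N → Fin n) (π : Equiv.Perm (Fin N))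
    (s : Fin N → Bool) (i : Fin N) :
    tau m w π (sig m w π s i) = sig m w π s (tau m w π i) := by
  simp only [sig_apply, rep_tau]
  split_ifs <;> rfl

theorem rk_flip (m : Matching n) (w : Fin N → Fin n) (π : Equiv.Perm (Fin N))
    (s : Fin N → Bool) (i : Fin N) :
    rk m w (π * sig m w π s) i = rk m w π (sig m w π s i) := by
  unfold rk
  rw [pool_eq (sig_mem m w π s i)]
  refine Finset.card_bij (fun j _ => sig m w π s j) ?_ ?_ ?_
  · intro j hj
    have hj := Finset.mem_filter.1 hj
    refine Finset.mem_filter.2 ⟨?_, hj.2⟩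
    rw [← pool_eq hj.1]; exact sig_mem m w π s j
  · intro a _ b _ e
    exact (sig m w π s).injective e
  · intro j hj
    have hj := Finset.mem_filter.1 hj
    refine ⟨sig m w π s j, Finset.mem_filter.2 ⟨?_, ?_⟩, sig_sig m w π s j⟩
    · rw [← pool_eq hj.1]; exact sig_mem m w π s j
    · rw [Equiv.Perm.mul_apply, sig_sig]; exact hj.2

theorem tau_flip (m : Matching n) (w : Fin N → Fin n) (π : Equiv.Perm (Fin N))
    (s : Fin N → Bool) (i : Fin N) :
    tau m w (π * sig m w π s) i = tau m w π i := by
  apply tau_unique (tau_mem m w π i)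
  rw [rk_flip, rk_flip, ← tau_sig, tau_rk, pool_eq (sig_mem m w π s i)]

theorem sig_flip (m : Matching n) (w : Fin N → Fin n) (π : Equiv.Perm (Fin N))
    (s : Fin N → Bool) :
    sig m w (π * sig m w π s) s = sig m w π s := by
  refine Equiv.ext fun i => ?_
  rw [sig_apply, sig_apply]
  unfold rep
  rw [tau_flip]

/-- random choices of one round -/
abbrev Ch (n N : ℕ) := (Fin n → Fin n → Bool) × Equiv.Perm (Fin N)

/-- flip of the random choices -/
noncomputable def flip (m : Matching n) (w : Fin N → Fin n)
    (s : Fin N ⊕ (Fin n × Fin n) → Bool) (ω : Ch n N) : Ch n N :=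
  (fun a b => xor (ω.1 a b) (s (Sum.inr (a, b))), ω.2 * sig m w ω.2 (fun i => s (Sum.inl i)))

theorem flip_invol (m : Matching n) (w : Fin N → Fin n)
    (s : Fin N ⊕ (Fin n × Fin n) → Bool) : Function.Involutive (flip m w s) := by
  rintro ⟨φ, π⟩
  unfold flip
  simp only [sig_flip]
  refine Prod.ext ?_ ?_
  · funext a b; simp
  · ext i
    simp [Equiv.Perm.mul_apply, sig_sig]

/-- class of a token -/
noncomputable def cls (m : Matching n) (w : Fin N → Fin n) (π : Equiv.Perm (Fin N))
    (i : Fin N) : Fin N ⊕ (Fin n × Fin n) :=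
  if tau m w π i = i then Sum.inr (lo m w i, hi m w i) else Sum.inl (rep m w π i)

/-- one step -/
def T (m : Matching n) (w : Fin N → Fin n) (ω : Ch n N) (i : Fin N) : Fin n :=
  tokenStep m ω.1 ω.2 w i

theorem T_flip (m : Matching n) (w : Fin N → Fin n)
    (s : Fin N ⊕ (Fin n × Fin n) → Bool) (ω : Ch n N) (i : Fin N) :
    T m w (flip m w s ω) i =
      if s (cls m w ω.2 i) then m.f (T m w ω i) else T m w ω i := by
  obtain ⟨φ, π⟩ := ω
  have ht := tau_rk m w π i
  simp only [T, step_eq, flip, cls, rk_flip, sig_apply]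
  have hf : ∀ p : Prop, ∀ _ : Decidable p, m.f (if p then lo m w i else hi m w i) =
      if p then hi m w i else lo m w i := by
    intro p _; split_ifs
    · exact f_lo m w i
    · exact f_hi m w i
  rw [hf]
  by_cases h : tau m w π i = i
  · rw [h] at ht
    simp only [h, if_true, ite_self]
    cases s (Sum.inr (lo m w i, hi m w i)) <;> cases φ (lo m w i) (hi m w i) <;> simp <;>
      split_ifs <;> first | rfl | omega
  · have hne : rk m w π (tau m w π i) ≠ rk m w π i := fun e => h (rk_inj (tau_mem m w π i) e)
    simp only [h, if_false]
    generalize s (Sum.inr (lo m w i, hi m w i)) = q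
    cases s (Sum.inl (rep m w π i)) <;> cases φ (lo m w i) (hi m w i) <;> cases q <;> simp <;>
      split_ifs <;> first | rfl | omega

theorem T_tau (m : Matching n) (w : Fin N → Fin n) (ω : Ch n N) (i : Fin N)
    (h : tau m w ω.2 i ≠ i) : T m w ω (tau m w ω.2 i) = m.f (T m w ω i) := by
  obtain ⟨φ, π⟩ := ω
  have ht := tau_rk m w π i
  have hne : rk m w π (tau m w π i) ≠ rk m w π i := fun e => h (rk_inj (tau_mem m w π i) e)
  simp only [T, step_eq]
  rw [lo_eq (tau_mem m w π i), hi_eq (tau_mem m w π i), pool_eq (tau_mem m w π i)]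
  have hf : ∀ p : Prop, ∀ _ : Decidable p, m.f (if p then lo m w i else hi m w i) =
      if p then hi m w i else lo m w i := by
    intro p _; split_ifs
    · exact f_lo m w i
    · exact f_hi m w i
  rw [hf]
  cases φ (lo m w i) (hi m w i) <;> simp <;> split_ifs <;> first | rfl | omega

theorem T_cases (m : Matching n) (w : Fin N → Fin n) (ω : Ch n N) (i : Fin N) :
    T m w ω i = w i ∨ T m w ω i = m.f (w i) := by
  have h : T m w ω i = lo m w i ∨ T m w ω i = hi m w i := by
    unfold T; rw [step_eq]; split_ifs <;> simp
  rcases h with h | h <;> rw [h]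
  · exact min_choice _ _
  · exact max_choice _ _

theorem fiber (m : Matching n) (w : Fin N → Fin n) (ω : Ch n N) (i j : Fin N)
    (h : cls m w ω.2 i = cls m w ω.2 j) (hij : i ≠ j) :
    tau m w ω.2 i ≠ i ∧ j = tau m w ω.2 i := by
  unfold cls at h
  have hti := tau_rk m w ω.2 i
  have htj := tau_rk m w ω.2 j
  split_ifs at h with h1 h2 h2
  · exfalso
    simp only [Sum.inr.injEq, Prod.mk.injEq] at h
    have hm := mem_pool_of_lo h.1
    rw [h1] at hti
    rw [h2] at htj
    rw [pool_eq hm] at hti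
    exact hij (rk_inj (π := ω.2) hm (by omega))
  · refine ⟨h1, ?_⟩
    simp only [Sum.inl.injEq] at h
    unfold rep at h
    have e := tau_tau m w ω.2 j
    have e' := tau_tau m w ω.2 i
    rcases min_choice i (tau m w ω.2 i) with a | a <;>
      rcases min_choice j (tau m w ω.2 j) with b | b <;> rw [a, b] at h
    · exact absurd h hij
    · rw [h, e]
    · exact h.symm
    · exact absurd (by rw [← e', h, e]) hij

theorem card_le_two_fiber (m : Matching n) (w : Fin N → Fin n) (ω : Ch n N)
    (S : Finset (Fin N)) (c : Fin N ⊕ (Fin n × Fin n)) (hS : ∀ i ∈ S, cls m w ω.2 i = c) :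
    S.card ≤ 2 := by
  rcases S.eq_empty_or_nonempty with rfl | ⟨i, hi⟩
  · simp
  · have : S ⊆ {i, tau m w ω.2 i} := by
      intro j hj
      by_cases e : i = j
      · simp [e]
      · have := (fiber m w ω i j ((hS i hi).trans (hS j hj).symm) e).2
        simp [this]
    exact (Finset.card_le_card this).trans Finset.card_le_two

theorem class_ineq (m : Matching n) (w : Fin N → Fin n) (ω : Ch n N) (g : Fin n → ℝ)
    (S : Finset (Fin N)) (c : Fin N ⊕ (Fin n × Fin n)) (hS : ∀ i ∈ S, cls m w ω.2 i = c) :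
    (∑ b : Bool, ∏ i ∈ S, g (if b then m.f (T m w ω i) else T m w ω i)) ≤
      2 * ∏ i ∈ S, (g (w i) + g (m.f (w i))) / 2 := by
  have hr : ∀ i, (g (w i) + g (m.f (w i))) / 2 = (g (T m w ω i) + g (m.f (T m w ω i))) / 2 := by
    intro i
    rcases T_cases m w ω i with h | h <;> rw [h]
    rw [m.invol, add_comm]
  simp only [hr, Fintype.sum_bool]
  have hc := card_le_two_fiber m w ω S c hS
  rcases (by omega : S.card = 0 ∨ S.card = 1 ∨ S.card = 2) with h | h | h
  · rw [Finset.card_eq_zero] at h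
    subst h
    norm_num
  · obtain ⟨i, rfl⟩ := Finset.card_eq_one.1 h
    simp only [Finset.prod_singleton, if_true]
    simp
    linarith
  · obtain ⟨i, j, hij, rfl⟩ := Finset.card_eq_two.1 h
    obtain ⟨h1, h2⟩ := fiber m w ω i j ((hS i (by simp)).trans (hS j (by simp)).symm) hij
    have h3 := T_tau m w ω i h1
    rw [← h2] at h3
    simp only [Finset.prod_pair hij, h3, m.invol, if_true]
    simp
    nlinarith [sq_nonneg (g (T m w ω i) - g (m.f (T m w ω i)))]

theorem step_flip_ineq (m : Matching n) (w : Fin N → Fin n) (ω : Ch n N) (g : Fin n → ℝ)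
    (hg : ∀ v, 0 ≤ g v) (B : Finset (Fin N)) :
    (∑ s : Fin N ⊕ (Fin n × Fin n) → Bool, ∏ i ∈ B, g (T m w (flip m w s ω) i)) ≤
      (Fintype.card (Fin N ⊕ (Fin n × Fin n) → Bool) : ℝ) *
        ∏ i ∈ B, (g (w i) + g (m.f (w i))) / 2 := by
  classical
  have h1 : ∀ s : Fin N ⊕ (Fin n × Fin n) → Bool,
      ∏ i ∈ B, g (T m w (flip m w s ω) i) =
      ∏ c, ∏ i ∈ B.filter (fun i => cls m w ω.2 i = c),
        g (if s c then m.f (T m w ω i) else T m w ω i) := by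
    intro s
    rw [← Finset.prod_fiberwise B (cls m w ω.2)]
    refine Finset.prod_congr rfl fun c _ => Finset.prod_congr rfl fun i hi => ?_
    rw [T_flip, (Finset.mem_filter.1 hi).2]
  simp only [h1]
  rw [← Finset.prod_fiberwise B (cls m w ω.2) (fun i => (g (w i) + g (m.f (w i))) / 2)]
  have h2 := Fintype.prod_sum (κ := fun _ : Fin N ⊕ (Fin n × Fin n) => Bool)
    (fun c (b : Bool) => ∏ i ∈ B.filter (fun i => cls m w ω.2 i = c),
        g (if b then m.f (T m w ω i) else T m w ω i))
  rw [← h2]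
  have h3 : (Fintype.card (Fin N ⊕ (Fin n × Fin n) → Bool) : ℝ) =
      ∏ _c : Fin N ⊕ (Fin n × Fin n), (2 : ℝ) := by
    simp
  rw [h3, ← Finset.prod_mul_distrib]
  refine Finset.prod_le_prod (fun c _ => ?_) (fun c _ => ?_)
  · exact Finset.sum_nonneg fun b _ => Finset.prod_nonneg fun i _ => hg _
  · exact class_ineq m w ω g _ c (fun i hi => (Finset.mem_filter.1 hi).2)

theorem step_ineq (m : Matching n) (w : Fin N → Fin n) (g : Fin n → ℝ)
    (hg : ∀ v, 0 ≤ g v) (B : Finset (Fin N)) :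
    (∑ ω : Ch n N, ∏ i ∈ B, g (T m w ω i)) ≤
      (Fintype.card (Ch n N) : ℝ) * ∏ i ∈ B, (g (w i) + g (m.f (w i))) / 2 := by
  classical
  set K := (Fintype.card (Fin N ⊕ (Fin n × Fin n) → Bool) : ℝ) with hK
  have hKpos : 0 < K := by rw [hK]; exact_mod_cast Fintype.card_pos
  refine le_of_mul_le_mul_left ?_ hKpos
  have h1 : ∀ s : Fin N ⊕ (Fin n × Fin n) → Bool,
      ∑ ω : Ch n N, ∏ i ∈ B, g (T m w (flip m w s ω) i) =
      ∑ ω : Ch n N, ∏ i ∈ B, g (T m w ω i) := fun s =>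
    Equiv.sum_comp (flip_invol m w s).toPerm (fun ω => ∏ i ∈ B, g (T m w ω i))
  calc K * ∑ ω : Ch n N, ∏ i ∈ B, g (T m w ω i)
      = ∑ s : Fin N ⊕ (Fin n × Fin n) → Bool, ∑ ω : Ch n N,
          ∏ i ∈ B, g (T m w (flip m w s ω) i) := by
        simp only [h1, Finset.sum_const, nsmul_eq_mul, Finset.card_univ, hK]
    _ = ∑ ω : Ch n N, ∑ s : Fin N ⊕ (Fin n × Fin n) → Bool,
          ∏ i ∈ B, g (T m w (flip m w s ω) i) := Finset.sum_comm
    _ ≤ ∑ ω : Ch n N, K * ∏ i ∈ B, (g (w i) + g (m.f (w i))) / 2 :=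
        Finset.sum_le_sum fun ω _ => step_flip_ineq m w ω g hg B
    _ = _ := by
        simp only [Finset.sum_const, nsmul_eq_mul, Finset.card_univ]
        ring

theorem mulVec_eq (m : Matching n) (g : Fin n → ℝ) (u : Fin n) :
    m.matrix.mulVec g u = (g u + g (m.f u)) / 2 := by
  simp only [Matrix.mulVec, dotProduct, Matching.matrix, Matrix.of_apply]
  by_cases h : m.f u = u
  · simp [h]
  · have : ∀ v, (if m.f u = u then (if v = u then (1:ℝ) else 0)
        else if v = u ∨ v = m.f u then (1 : ℝ) / 2 else 0) * g v =
        (if v = u then g v / 2 else 0) + (if v = m.f u then g v / 2 else 0) := by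
      intro v
      rw [if_neg h]
      by_cases a : v = u
      · subst a
        simp [Ne.symm h]; ring
      · by_cases b : v = m.f u
        · simp [b, h]; ring
        · simp [a, b]
    simp only [this, Finset.sum_add_distrib, Finset.sum_ite_eq', Finset.mem_univ, if_true]
    ring

theorem prodMatrix_succ (M : ℕ → Matching n) (t r : ℕ) :
    prodMatrix M (t + 1) (t + (r + 1)) =
      prodMatrix M (t + 1) (t + r) * (M (t + r + 1)).matrix := by
  unfold prodMatrix
  rw [show t + (r + 1) + 1 - (t + 1) = r + 1 by omega, show t + r + 1 - (t + 1) = r by omega,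
    List.range'_concat]
  simp
  congr 3
  omega

theorem prodMatrix_zero (M : ℕ → Matching n) (t : ℕ) :
    prodMatrix M (t + 1) (t + 0) = 1 := by
  unfold prodMatrix
  simp

theorem tokensFrom_congr (M : ℕ → Matching n) (t : ℕ) (R R' : ℕ → Ch n N) (w : Fin N → Fin n)
    (r : ℕ) (h : ∀ s, 1 ≤ s → s ≤ r → R s = R' s) :
    tokensFrom M t R w r = tokensFrom M t R' w r := by
  induction r with
  | zero => rfl
  | succ r ih =>
    simp only [tokensFrom]
    rw [ih fun s a b => h s a (by omega), h (r + 1) (by omega) le_rfl]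

theorem tokensFrom_snoc (M : ℕ → Matching n) (t : ℕ) (a₀ : Ch n N) (w : Fin N → Fin n)
    (r : ℕ) (ω : Fin r → Ch n N) (a : Ch n N) (i : Fin N) :
    tokensFrom M t (lift a₀ (Fin.snoc (α := fun _ => Ch n N) ω a)) w (r + 1) i =
      T (M (t + r + 1)) (tokensFrom M t (lift a₀ ω) w r) a i := by
  have e : lift a₀ (Fin.snoc (α := fun _ => Ch n N) ω a) (r + 1) = a := by
    simp [lift, Fin.snoc]
  have e2 : tokensFrom M t (lift a₀ (Fin.snoc (α := fun _ => Ch n N) ω a)) w r =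
      tokensFrom M t (lift a₀ ω) w r := by
    apply tokensFrom_congr
    intro s h1 h2
    have a1 : s - 1 < r + 1 := by omega
    have a2 : s - 1 < r := by omega
    simp [lift, a1, a2, Fin.snoc]
  simp only [tokensFrom, T]
  rw [e, e2]

theorem main_ineq (M : ℕ → Matching n) (t : ℕ) (a₀ : Ch n N) (w : Fin N → Fin n)
    (B : Finset (Fin N)) (r : ℕ) (g : Fin n → ℝ) (hg : ∀ v, 0 ≤ g v) :
    (∑ ω : Fin r → Ch n N, ∏ i ∈ B, g (tokensFrom M t (lift a₀ ω) w r i)) ≤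
      (Fintype.card (Fin r → Ch n N) : ℝ) *
        ∏ i ∈ B, (prodMatrix M (t + 1) (t + r)).mulVec g (w i) := by
  induction r generalizing g with
  | zero =>
    rw [prodMatrix_zero]
    simp [tokensFrom]
  | succ r ih =>
    have hg' : ∀ v, 0 ≤ (M (t + r + 1)).matrix.mulVec g v := by
      intro v; rw [mulVec_eq]; have := hg v; have := hg ((M (t + r + 1)).f v); positivity
    have h := ih _ hg'
    rw [prodMatrix_succ, ← Matrix.mulVec_mulVec]
    rw [← Equiv.sum_comp (Fin.snocEquiv (fun _ : Fin (r + 1) => Ch n N)), Fintype.sum_prod_type_right]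
    have hs : ∀ ω : Fin r → Ch n N, (∑ a : Ch n N, ∏ i ∈ B,
        g (tokensFrom M t (lift a₀ (Fin.snocEquiv (fun _ : Fin (r + 1) => Ch n N) (a, ω))) w
          (r + 1) i)) ≤ (Fintype.card (Ch n N) : ℝ) * ∏ i ∈ B,
          (M (t + r + 1)).matrix.mulVec g (tokensFrom M t (lift a₀ ω) w r i) := by
      intro ω
      have := step_ineq (M (t + r + 1)) (tokensFrom M t (lift a₀ ω) w r) g hg B
      simp only [← mulVec_eq] at this
      refine le_trans (le_of_eq ?_) this
      refine Finset.sum_congr rfl fun a _ => Finset.prod_congr rfl fun i _ => ?_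
      rw [← tokensFrom_snoc]
      rfl
    refine (Finset.sum_le_sum fun ω _ => hs ω).trans ?_
    rw [← Finset.mul_sum]
    have hc : (Fintype.card (Fin (r + 1) → Ch n N) : ℝ) =
        (Fintype.card (Ch n N) : ℝ) * (Fintype.card (Fin r → Ch n N) : ℝ) := by
      rw [Fintype.card_fun, Fintype.card_fun, Fintype.card_fin, Fintype.card_fin, pow_succ']
      push_cast; rfl
    rw [hc, mul_assoc]
    exact mul_le_mul_of_nonneg_left h (Nat.cast_nonneg _)

theorem row_sum (M : ℕ → Matching n) (t r : ℕ) :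
    (prodMatrix M (t + 1) (t + r)).mulVec (fun _ => (1 : ℝ)) = fun _ => 1 := by
  induction r with
  | zero => rw [prodMatrix_zero]; simp
  | succ r ih =>
    rw [prodMatrix_succ, ← Matrix.mulVec_mulVec]
    have : (M (t + r + 1)).matrix.mulVec (fun _ => (1 : ℝ)) = fun _ => 1 := by
      funext u; rw [mulVec_eq]; norm_num
    rw [this, ih]

theorem pr_le (M : ℕ → Matching n) (t : ℕ) (a₀ : Ch n N) (w : Fin N → Fin n)
    (B : Finset (Fin N)) (r : ℕ) (D : Finset (Fin n)) :
    pr (fun ω : Fin r → Ch n N => ∀ i ∈ B, tokensFrom M t (lift a₀ ω) w r i ∈ D) ≤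
      ∏ i ∈ B, ∑ v ∈ D, prodMatrix M (t + 1) (t + r) (w i) v := by
  classical
  have h := main_ineq M t a₀ w B r (fun v => if v ∈ D then 1 else 0)
    (fun v => by split_ifs <;> norm_num)
  have hc : (0 : ℝ) < Fintype.card (Fin r → Ch n N) := by
    haveI : Nonempty (Fin r → Ch n N) := ⟨fun _ => a₀⟩
    exact_mod_cast Fintype.card_pos
  have e1 : ∀ i, (prodMatrix M (t + 1) (t + r)).mulVec (fun v => if v ∈ D then (1 : ℝ) else 0) (w i)
      = ∑ v ∈ D, prodMatrix M (t + 1) (t + r) (w i) v := by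
    intro i
    simp [Matrix.mulVec, dotProduct]
  simp only [e1] at h
  unfold pr
  rw [div_le_iff₀ hc, mul_comm]
  refine le_trans (le_of_eq ?_) h
  rw [Finset.card_filter]
  push_cast
  refine Finset.sum_congr rfl fun ω _ => ?_
  rw [Finset.prod_ite_zero]
  simp

theorem pr_compl {Ω : Type*} [Fintype Ω] [Nonempty Ω] (A : Ω → Prop) :
    pr A + pr (fun ω => ¬ A ω) = 1 := by
  classical
  have hc : (Fintype.card Ω : ℝ) ≠ 0 := by exact_mod_cast Fintype.card_ne_zero
  unfold pr
  rw [← add_div, div_eq_one_iff_eq hc]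
  have := Finset.card_filter_add_card_filter_not (s := (Finset.univ : Finset Ω)) A
  rw [Finset.card_univ] at this
  rw [← this]
  push_cast
  congr!

theorem pr_eq (M : ℕ → Matching n) (t : ℕ) (a₀ : Ch n N) (w : Fin N → Fin n)
    (i : Fin N) (r : ℕ) (D : Finset (Fin n)) :
    ∑ v ∈ D, prodMatrix M (t + 1) (t + r) (w i) v =
    pr (fun ω : Fin r → Ch n N => tokensFrom M t (lift a₀ ω) w r i ∈ D) := by
  classical
  haveI : Nonempty (Fin r → Ch n N) := ⟨fun _ => a₀⟩
  have h1 := pr_le M t a₀ w {i} r D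
  have h2 := pr_le M t a₀ w {i} r Dᶜ
  simp only [Finset.mem_singleton, forall_eq, Finset.prod_singleton, Finset.mem_compl] at h1 h2
  have h3 := pr_compl (fun ω : Fin r → Ch n N => tokensFrom M t (lift a₀ ω) w r i ∈ D)
  have h4 := congrFun (row_sum M t r) (w i)
  simp only [Matrix.mulVec, dotProduct, mul_one] at h4
  rw [← Finset.sum_add_sum_compl D] at h4
  linarith

end aux

/-- Negative correlation of tokens:  for any subset `𝓑` of the
tokens, any subset `D` of the nodes and rounds `t₁ < t₂`,
`P(⋀_{i∈𝓑} w_i^{(t₂)} ∈ D) ≤ ∏_{i∈𝓑} M^{[t₁+1,t₂]}_{w_i^{(t₁)},D}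
  = ∏_{i∈𝓑} P(w_i^{(t₂)} ∈ D)`. -/
theorem stmt12 {n N : ℕ} (hn : 0 < n) (M : ℕ → Matching n) (t₁ t₂ : ℕ)
    (h : t₁ < t₂) (w0 : Fin N → Fin n) (B : Finset (Fin N)) (D : Finset (Fin n)) :
    (pr (fun ω : Fin (t₂ - t₁) → (Fin n → Fin n → Bool) × Equiv.Perm (Fin N) =>
        ∀ i ∈ B, tokensFrom M t₁ (lift (orientDefault n, Equiv.refl (Fin N)) ω) w0
          (t₂ - t₁) i ∈ D)
      ≤ ∏ i ∈ B, ∑ v ∈ D, prodMatrix M (t₁ + 1) t₂ (w0 i) v) ∧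
    ((∏ i ∈ B, ∑ v ∈ D, prodMatrix M (t₁ + 1) t₂ (w0 i) v)
      = ∏ i ∈ B,
          pr (fun ω : Fin (t₂ - t₁) → (Fin n → Fin n → Bool) × Equiv.Perm (Fin N) =>
            tokensFrom M t₁ (lift (orientDefault n, Equiv.refl (Fin N)) ω) w0
              (t₂ - t₁) i ∈ D)) := by
  obtain ⟨r, rfl⟩ := Nat.exists_eq_add_of_lt h
  have e : t₁ + r + 1 - t₁ = r + 1 := by omega
  rw [e]
  refine ⟨pr_le M t₁ _ w0 B (r + 1) D, ?_⟩
  exact Finset.prod_congr rfl fun i _ => pr_eq M t₁ _ w0 i (r + 1) D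

end LB
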